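/- Let n = 1 and let I = (x² + y² − 1)·(x − 1, y) ⊆ ℝ[x,y] be the ideal of the unit circle with a thickened point at 1 (equivalently, I = J ∩ ℝ[x,y] where J is the ideal of ℂ[z,z̄] generated by (z−1)(zz̄−1) and (z̄−1)(zz̄−1)). Then: (1) I satisfies (Sf): every complex square matrix T with ψ_T(f) = 0 for all f ∈ I is unitary, hence normal; (2) I does not satisfy (S): there exists a bounded operator T on a complex Hilbert space with ψ_T(f) = 0 for all f ∈ I that is not subnormal (indeed T = S + π, where S is the unilateral shift on ℓ²(ℕ) and π is the orthogonal projection onto the span of the first basis vector, satisfies (T* − 1)(T*T − 1) = 0 but is not subnormal). -/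

import Mathlib

open MvPolynomial Complex Matrix MeasureTheory ComplexOrder

noncomputable section

universe u

/-- `ℂ[z,z̄]`: the polynomial ring in the `2n` variables `z_j` (encoded `Sum.inl j`)
and `z̄_j` (encoded `Sum.inr j`). -/
abbrev CPoly (n : ℕ) := MvPolynomial (Fin n ⊕ Fin n) ℂ

/-- The involution `f ↦ f*`: conjugate the coefficients and swap `z_j ↔ z̄_j`. -/
def hermStar (n : ℕ) : CPoly n →+* CPoly n :=
  (MvPolynomial.rename (Sum.swap : Fin n ⊕ Fin n → Fin n ⊕ Fin n)).toRingHom.comp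
    (MvPolynomial.map (starRingEnd ℂ))

/-- The inclusion of the holomorphic polynomials `ℂ[z]` into `ℂ[z,z̄]`. -/
def hol (n : ℕ) : MvPolynomial (Fin n) ℂ →ₐ[ℂ] CPoly n :=
  MvPolynomial.rename Sum.inl

/-- Evaluation `f(a,b)` (substituting `a` for `z` and `b` for `z̄`). -/
def evalPair {n : ℕ} (a b : Fin n → ℂ) (f : CPoly n) : ℂ :=
  MvPolynomial.eval (Sum.elim a b) f

/-- Evaluation `f(a) := f(a, ā)`. -/
def evalAt {n : ℕ} (a : Fin n → ℂ) (f : CPoly n) : ℂ :=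
  evalPair a (fun j => (starRingEnd ℂ) (a j)) f

/-- `‖z‖² = |z_1|² + ⋯ + |z_n|²`. -/
def normZ (n : ℕ) : CPoly n := ∑ j : Fin n, X (Sum.inl j) * X (Sum.inr j)

/-- `Σ_h`: hermitian sums of squares `∑ |p_i|²`, `p_i ∈ ℂ[z]` holomorphic. -/
def SigmaH (n : ℕ) : Set (CPoly n) :=
  {f | ∃ (k : ℕ) (p : Fin k → MvPolynomial (Fin n) ℂ),
    f = ∑ i, hol n (p i) * hermStar n (hol n (p i))}

/-- `Σ`: sums of squares `∑ |p_i|²`, `p_i ∈ ℂ[z,z̄]`. -/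
def SigmaFull (n : ℕ) : Set (CPoly n) :=
  {f | ∃ (k : ℕ) (p : Fin k → CPoly n), f = ∑ i, p i * hermStar n (p i)}

/-- Ideals `I ⊆ ℝ[x,y]`, viewed as sets of `*`-fixed elements of `ℂ[z,z̄]`. -/
def IsRealIdeal (n : ℕ) (I : Set (CPoly n)) : Prop :=
  (∀ f ∈ I, hermStar n f = f) ∧ (0 : CPoly n) ∈ I ∧
    (∀ f ∈ I, ∀ g ∈ I, f + g ∈ I) ∧
    ∀ f : CPoly n, hermStar n f = f → ∀ g ∈ I, f * g ∈ I

/-- The semiring `Σ_h + I`. -/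
def SigmaHPlus (n : ℕ) (I : Set (CPoly n)) : Set (CPoly n) :=
  {f | ∃ s ∈ SigmaH n, ∃ g ∈ I, f = s + g}

/-- The real zero set `V_ℝ(I) ⊆ ℂⁿ`. -/
def VR (n : ℕ) (I : Set (CPoly n)) : Set (Fin n → ℂ) :=
  {a | ∀ f ∈ I, evalAt a f = 0}

/-- A subset `M` of `ℝ[x,y]` is archimedean if for every real `f` there is `c ∈ ℝ`
with `c ± f ∈ M`. -/
def IsArchSet (n : ℕ) (M : Set (CPoly n)) : Prop :=
  ∀ f : CPoly n, hermStar n f = f →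
    ∃ c : ℝ, (C (c : ℂ) + f) ∈ M ∧ (C (c : ℂ) - f) ∈ M

/-- Hermitian modules in `ℝ[x,y]`. -/
def IsHermitianModule (n : ℕ) (M : Set (CPoly n)) : Prop :=
  (∀ f ∈ M, hermStar n f = f) ∧ (1 : CPoly n) ∈ M ∧
    (∀ f ∈ M, ∀ g ∈ M, f + g ∈ M) ∧
    ∀ s ∈ SigmaH n, ∀ f ∈ M, s * f ∈ M

/-- The closed set `X_M ⊆ ℂⁿ` associated with a hermitian module. -/
def XM (n : ℕ) (M : Set (CPoly n)) : Set (Fin n → ℂ) :=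
  {a | ∀ g ∈ M, 0 ≤ (evalAt a g).re}

/-- Hereditary calculus `ψ_T` for a tuple of bounded operators:
`ψ_T(z^α z̄^β) = T^{*β} T^α` (adjoints to the left). -/
def psiOp {n : ℕ} {E : Type u} [NormedAddCommGroup E] [InnerProductSpace ℂ E]
    [CompleteSpace E] (T : Fin n → E →L[ℂ] E) (f : CPoly n) : E →L[ℂ] E :=
  ∑ m ∈ f.support, f.coeff m •
    ((List.ofFn fun j => (ContinuousLinearMap.adjoint (T j)) ^ (m (Sum.inr j))).prod *
     (List.ofFn fun j => (T j) ^ (m (Sum.inl j))).prod)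

/-- Hereditary calculus `ψ_T` for a tuple of matrices. -/
def psiMat {n m : ℕ} (T : Fin n → Matrix (Fin m) (Fin m) ℂ) (f : CPoly n) :
    Matrix (Fin m) (Fin m) ℂ :=
  ∑ mo ∈ f.support, f.coeff mo •
    ((List.ofFn fun j => ((T j)ᴴ) ^ (mo (Sum.inr j))).prod *
     (List.ofFn fun j => (T j) ^ (mo (Sum.inl j))).prod)

/-- A commuting tuple `T` on a Hilbert space `E` is subnormal if it extends to a
commuting tuple of bounded normal operators on a larger Hilbert space `E'`,
leaving (the image of) `E` invariant. -/
def IsSubnormal {n : ℕ} {E : Type u} [NormedAddCommGroup E] [InnerProductSpace ℂ E]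
    [CompleteSpace E] (T : Fin n → E →L[ℂ] E) : Prop :=
  ∃ (E' : Type u) (_ : NormedAddCommGroup E') (_ : InnerProductSpace ℂ E')
    (_ : CompleteSpace E') (ι : E →ₗᵢ[ℂ] E') (N : Fin n → E' →L[ℂ] E'),
      (∀ i j, Commute (N i) (N j)) ∧
      (∀ j, Commute (N j) (ContinuousLinearMap.adjoint (N j))) ∧
      ∀ j x, N j (ι x) = ι (T j x)

/-- The "diamond" ideal `I(a,b)`. -/
def Iab {n : ℕ} (a b : Fin n → ℂ) : Set (CPoly n) :=
  {f | evalPair a (fun j => (starRingEnd ℂ) (a j)) f = 0 ∧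
       evalPair a (fun j => (starRingEnd ℂ) (b j)) f = 0 ∧
       evalPair b (fun j => (starRingEnd ℂ) (a j)) f = 0 ∧
       evalPair b (fun j => (starRingEnd ℂ) (b j)) f = 0}

/-- The degenerate ideal `J(a,U)`. -/
def Jau {n : ℕ} (a : Fin n → ℂ) (U : Matrix (Fin n) (Fin n) ℂ) : Set (CPoly n) :=
  {f | evalAt a f = 0 ∧
    U.mulVec (fun k => evalAt a (pderiv (Sum.inl k) f)) = 0 ∧
    (U.map (starRingEnd ℂ)).mulVec (fun k => evalAt a (pderiv (Sum.inr k) f)) = 0 ∧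
    Matrix.trace
      (U * Matrix.of fun j k => evalAt a (pderiv (Sum.inr k) (pderiv (Sum.inl j) f))) = 0}

/-!
For `n = 1` the kernel of `ψ_t` is an ideal, and the ideal `J` generated by `(z - 1)(zz̄ - 1)` and
`(z̄ - 1)(zz̄ - 1)` is spanned over `ℂ` by its hermitian elements. Hence `ψ_t` vanishes on these if
and only if `(t* - 1)(t*t - 1) = 0`, i.e. `t* a = a` for the self-adjoint element `a = t*t - 1`.

If one-sided inverses are two-sided, the relation makes `t - a` the inverse of `t*`, whence
`(t - a) a = a` and finally `a³ = 0`; a self-adjoint nilpotent matrix vanishes, so `t` is unitary.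

In infinite dimension let `t = s + p` with `s` an isometry and `p` a nonzero projection with
`p s = 0`. Then `t*t = 1 + p` and `t* p = p`, so the relation holds, while a vector `x` in the
range of `p` has `‖t x‖² = 2‖x‖²` and `‖t² x‖² = 3‖x‖²`. This violates the inequality
`‖t x‖² ≤ ‖t² x‖ ‖x‖`, which subnormal operators inherit from normal ones.
-/

section HereditaryCalculus

variable {A : Type*} [Semiring A] [Algebra ℂ A] [Star A]

/-- The hereditary calculus `ψ_t` of a single element `t` of a `ℂ`-algebra with an involution:
the linear map sending `z ^ k * z̄ ^ l` to `star t ^ l * t ^ k`. It specializes both to `psiMat`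
and to `psiOp` for `n = 1`. -/
def hereditaryCalculus (t : A) : CPoly 1 →ₗ[ℂ] A :=
  (basisMonomials _ ℂ).constr ℂ fun m ↦ star t ^ m (Sum.inr 0) * t ^ m (Sum.inl 0)

theorem hereditaryCalculus_monomial (t : A) (m : Fin 1 ⊕ Fin 1 →₀ ℕ) (c : ℂ) :
    hereditaryCalculus t (monomial m c) =
      c • (star t ^ m (Sum.inr 0) * t ^ m (Sum.inl 0)) := by
  have hm : (monomial m c : CPoly 1) = c • basisMonomials _ ℂ m := by
    simp [smul_monomial]
  rw [hm, map_smul, hereditaryCalculus, Module.Basis.constr_basis]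

theorem hereditaryCalculus_eq_sum (t : A) (f : CPoly 1) :
    hereditaryCalculus t f =
      ∑ m ∈ f.support, f.coeff m • (star t ^ m (Sum.inr 0) * t ^ m (Sum.inl 0)) := by
  conv_lhs => rw [f.as_sum]
  simp only [map_sum, hereditaryCalculus_monomial]

theorem hereditaryCalculus_one (t : A) : hereditaryCalculus t 1 = 1 := by
  simpa using hereditaryCalculus_monomial t 0 1

theorem hereditaryCalculus_X_inl_mul (t : A) (f : CPoly 1) :
    hereditaryCalculus t (X (Sum.inl 0) * f) = hereditaryCalculus t f * t := by
  induction f using MvPolynomial.induction_on' with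
  | monomial m c =>
    simp [X, monomial_mul, hereditaryCalculus_monomial, pow_add, pow_succ', mul_assoc,
      pow_mul_comm']
  | add f g hf hg => rw [mul_add, map_add, hf, hg, map_add, add_mul]

theorem hereditaryCalculus_X_inr_mul (t : A) (f : CPoly 1) :
    hereditaryCalculus t (X (Sum.inr 0) * f) = star t * hereditaryCalculus t f := by
  induction f using MvPolynomial.induction_on' with
  | monomial m c =>
    simp [X, monomial_mul, hereditaryCalculus_monomial, pow_add, mul_assoc]
  | add f g hf hg => rw [mul_add, map_add, hf, hg, map_add, mul_add]

theorem hereditaryCalculus_mul_eq_zero {t : A} (p : CPoly 1) {f : CPoly 1}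
    (hf : hereditaryCalculus t f = 0) : hereditaryCalculus t (p * f) = 0 := by
  induction p using MvPolynomial.induction_on with
  | C c => rw [C_mul', map_smul, hf, smul_zero]
  | add p q hp hq => rw [add_mul, map_add, hp, hq, add_zero]
  | mul_X p i hp =>
    rw [mul_comm p, mul_assoc]
    obtain i | i := i <;> obtain rfl := Subsingleton.elim i 0
    · rw [hereditaryCalculus_X_inl_mul, hp, zero_mul]
    · rw [hereditaryCalculus_X_inr_mul, hp, mul_zero]

/-- The kernel of the hereditary calculus `ψ_t`. Although `ψ_t` is not multiplicative, its kernel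
is an ideal. -/
def hereditaryKer (t : A) : Ideal (CPoly 1) where
  __ := (LinearMap.ker (hereditaryCalculus t)).toAddSubmonoid
  smul_mem' p _ hf := hereditaryCalculus_mul_eq_zero p hf

theorem mem_hereditaryKer {t : A} {f : CPoly 1} :
    f ∈ hereditaryKer t ↔ hereditaryCalculus t f = 0 :=
  Iff.rfl

end HereditaryCalculus

theorem psiMat_eq_hereditaryCalculus {m : ℕ} (T : Matrix (Fin m) (Fin m) ℂ) (f : CPoly 1) :
    psiMat (fun _ : Fin 1 ↦ T) f = hereditaryCalculus T f := by
  simp [psiMat, hereditaryCalculus_eq_sum, star_eq_conjTranspose]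

theorem psiOp_eq_hereditaryCalculus {E : Type u} [NormedAddCommGroup E] [InnerProductSpace ℂ E]
    [CompleteSpace E] (T : E →L[ℂ] E) (f : CPoly 1) :
    psiOp (fun _ : Fin 1 ↦ T) f = hereditaryCalculus T f := by
  simp [psiOp, hereditaryCalculus_eq_sum, ContinuousLinearMap.star_eq_adjoint]

theorem hermStar_hermStar {n : ℕ} (f : CPoly n) : hermStar n (hermStar n f) = f := by
  simp [hermStar, map_rename, rename_rename, MvPolynomial.map_map, MvPolynomial.map_id]

theorem hermStar_smul {n : ℕ} (c : ℂ) (f : CPoly n) :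
    hermStar n (c • f) = star c • hermStar n f := by
  simp [hermStar, smul_eq_C_mul]

theorem le_ker_of_forall_hermitian {n : ℕ} {V : Type*} [AddCommMonoid V] [Module ℂ V]
    (φ : CPoly n →ₗ[ℂ] V) {J : Submodule ℂ (CPoly n)} (hJ : ∀ g ∈ J, hermStar n g ∈ J)
    (hφ : ∀ g ∈ J, hermStar n g = g → φ g = 0) : J ≤ LinearMap.ker φ := by
  intro g hg
  have hre : φ (g + hermStar n g) = 0 :=
    hφ _ (J.add_mem hg (hJ g hg)) (by rw [map_add, hermStar_hermStar, add_comm])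
  have him : φ (I • (g - hermStar n g)) = 0 :=
    hφ _ (J.smul_mem I (J.sub_mem hg (hJ g hg))) (by
      rw [hermStar_smul, map_sub, hermStar_hermStar, ← neg_sub g, smul_neg, ← neg_smul]
      simp)
  have hg_eq : g = (2⁻¹ : ℂ) • ((g + hermStar n g) + (-I) • I • (g - hermStar n g)) := by
    rw [smul_smul, neg_mul, I_mul_I, neg_neg, one_smul]
    module
  rw [LinearMap.mem_ker, hg_eq, map_smul, map_add, map_smul, hre, him, smul_zero, add_zero,
    smul_zero]

/-- The ideal of `ℂ[z,z̄]` generated by `(z - 1)(zz̄ - 1)` and `(z̄ - 1)(zz̄ - 1)`: the unit circle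
with a thickened point at `1`. -/
def thickenedCircle : Ideal (CPoly 1) :=
  Ideal.span {(X (Sum.inl 0) - 1) * (X (Sum.inl 0) * X (Sum.inr 0) - 1),
    (X (Sum.inr 0) - 1) * (X (Sum.inl 0) * X (Sum.inr 0) - 1)}

theorem hermStar_mem_thickenedCircle {g : CPoly 1} (hg : g ∈ thickenedCircle) :
    hermStar 1 g ∈ thickenedCircle := by
  suffices h : thickenedCircle ≤ thickenedCircle.comap (hermStar 1) from h hg
  conv_lhs => rw [thickenedCircle]
  rw [Ideal.span_le, Set.pair_subset_iff]
  constructor <;> refine Ideal.subset_span ?_ <;>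
    simp [hermStar, mul_comm (X (Sum.inr 0)) (X (Sum.inl 0) : CPoly 1)]

section Relation

variable {A : Type*} [Ring A] [StarRing A]

theorem thickenedCircle_le_hereditaryKer_iff [Algebra ℂ A] {t : A} :
    thickenedCircle ≤ hereditaryKer t ↔ (star t - 1) * (star t * t - 1) = 0 := by
  have hcircle : hereditaryCalculus t (X (Sum.inl 0) * X (Sum.inr 0) - 1) = star t * t - 1 := by
    rw [map_sub, hereditaryCalculus_X_inl_mul, ← mul_one (X (Sum.inr 0)),
      hereditaryCalculus_X_inr_mul, hereditaryCalculus_one, mul_one]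
  have hz : hereditaryCalculus t ((X (Sum.inl 0) - 1) * (X (Sum.inl 0) * X (Sum.inr 0) - 1)) =
      (star t * t - 1) * (t - 1) := by
    rw [sub_one_mul, map_sub, hereditaryCalculus_X_inl_mul, hcircle, mul_sub_one]
  have hzbar :
      hereditaryCalculus t ((X (Sum.inr 0) - 1) * (X (Sum.inl 0) * X (Sum.inr 0) - 1)) =
        (star t - 1) * (star t * t - 1) := by
    rw [sub_one_mul, map_sub, hereditaryCalculus_X_inr_mul, hcircle, sub_one_mul]
  have hstar : star ((star t - 1) * (star t * t - 1)) = (star t * t - 1) * (t - 1) := by simp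
  rw [thickenedCircle, Ideal.span_le, Set.pair_subset_iff, SetLike.mem_coe, SetLike.mem_coe,
    mem_hereditaryKer, mem_hereditaryKer, hz, hzbar, ← hstar, star_eq_zero, and_self_iff]

theorem forall_hermitian_hereditaryCalculus_eq_zero_iff [Algebra ℂ A] {t : A} :
    (∀ g ∈ thickenedCircle, hermStar 1 g = g → hereditaryCalculus t g = 0) ↔
      (star t - 1) * (star t * t - 1) = 0 := by
  rw [← thickenedCircle_le_hereditaryKer_iff]
  refine ⟨fun h ↦ ?_, fun h g hg _ ↦ h hg⟩
  exact le_ker_of_forall_hermitian (J := thickenedCircle.restrictScalars ℂ) _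
    (fun _ ↦ hermStar_mem_thickenedCircle) h

theorem star_mul_self_sub_one_pow_three_eq_zero [IsDedekindFiniteMonoid A] {t : A}
    (h : (star t - 1) * (star t * t - 1) = 0) : (star t * t - 1) ^ 3 = 0 := by
  obtain ⟨a, ha⟩ : ∃ a, a = star t * t - 1 := ⟨_, rfl⟩
  rw [← ha] at h ⊢
  have ha_star : star a = a := by simp [ha]
  have hta : star t * a = a := by rwa [sub_one_mul, sub_eq_zero] at h
  have hinv : (t - a) * star t = 1 := by
    rw [← mul_eq_one_comm, mul_sub, hta, ha, sub_sub_cancel]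
  have hleft : (t - a) * a = a := calc
    (t - a) * a = (t - a) * star t * a := by rw [mul_assoc, hta]
    _ = a := by rw [hinv, one_mul]
  have hright : a * (star t - a) = a := by
    simpa [ha_star] using congr(star $hleft)
  have hsq : a ^ 2 - a ^ 3 = a ^ 2 := calc
    a ^ 2 - a ^ 3 = a * (star t * a) - a * a * a := by rw [hta]; noncomm_ring
    _ = a * (star t - a) * a := by noncomm_ring
    _ = a ^ 2 := by rw [hright, sq]
  exact sub_eq_self.mp hsq

theorem star_mul_self_eq_one_of_sub_one_mul_eq_zero [IsDedekindFiniteMonoid A]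
    (hproper : ∀ a : A, star a * a = 0 → a = 0) {t : A}
    (h : (star t - 1) * (star t * t - 1) = 0) : star t * t = 1 := by
  have hcube := star_mul_self_sub_one_pow_three_eq_zero h
  have ha_star : star (star t * t - 1) = star t * t - 1 := by simp
  have hsq : (star t * t - 1) ^ 2 = 0 := by
    apply hproper
    rw [star_pow, ha_star, ← pow_add, pow_succ, hcube, zero_mul]
  refine sub_eq_zero.mp (hproper _ ?_)
  rw [ha_star, ← sq, hsq]

variable {s p : A}

theorem star_mul_eq_zero_of_mul_eq_zero (hp : IsSelfAdjoint p) (hps : p * s = 0) :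
    star s * p = 0 := by
  simpa [hp.star_eq] using congr(star $hps)

theorem star_mul_self_isometry_add_projection (hs : star s * s = 1) (hp : IsStarProjection p)
    (hps : p * s = 0) : star (s + p) * (s + p) = 1 + p := by
  rw [star_add, hp.isSelfAdjoint.star_eq, add_mul, mul_add, mul_add, hs, hps,
    star_mul_eq_zero_of_mul_eq_zero hp.isSelfAdjoint hps, hp.isIdempotentElem.eq, add_zero,
    zero_add]

theorem star_sub_one_mul_isometry_add_projection_eq_zero (hs : star s * s = 1)
    (hp : IsStarProjection p) (hps : p * s = 0) :
    (star (s + p) - 1) * (star (s + p) * (s + p) - 1) = 0 := by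
  rw [star_mul_self_isometry_add_projection hs hp hps, add_sub_cancel_left, sub_one_mul, star_add,
    add_mul, star_mul_eq_zero_of_mul_eq_zero hp.isSelfAdjoint hps, hp.isSelfAdjoint.star_eq,
    hp.isIdempotentElem.eq, zero_add, sub_self]

end Relation

section Hilbert

variable {𝕜 : Type*} [RCLike 𝕜] {H : Type*} [NormedAddCommGroup H] [InnerProductSpace 𝕜 H]
  [CompleteSpace H]

theorem norm_apply_sq_le_of_isStarNormal (N : H →L[𝕜] H) [IsStarNormal N] (x : H) :
    ‖N x‖ ^ 2 ≤ ‖N (N x)‖ * ‖x‖ := by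
  calc ‖N x‖ ^ 2 = RCLike.re (inner 𝕜 (star N (N x)) x) :=
        N.apply_norm_sq_eq_inner_adjoint_left x
    _ ≤ ‖star N (N x)‖ * ‖x‖ := re_inner_le_norm _ _
    _ = ‖N (N x)‖ * ‖x‖ := by
      rw [ContinuousLinearMap.star_eq_adjoint,
        ← ContinuousLinearMap.isStarNormal_iff_norm_eq_adjoint.mp ‹_›]

theorem norm_isometry_add_projection_apply_sq {s p : H →L[𝕜] H} (hs : star s * s = 1)
    (hp : IsStarProjection p) (hps : p * s = 0) (x : H) :
    ‖(s + p) x‖ ^ 2 = ‖x‖ ^ 2 + ‖p x‖ ^ 2 := by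
  have hpp : star p * p = p := by rw [hp.isSelfAdjoint.star_eq, hp.isIdempotentElem.eq]
  have key := star_mul_self_isometry_add_projection hs hp hps
  simp only [ContinuousLinearMap.star_eq_adjoint, ContinuousLinearMap.mul_def] at hpp key
  rw [ContinuousLinearMap.apply_norm_sq_eq_inner_adjoint_left,
    p.apply_norm_sq_eq_inner_adjoint_left, key, hpp]
  simp [inner_add_left]

/-- The unilateral shift `b n ↦ b (n + 1)` along a Hilbert basis `b` indexed by `ℕ`. -/
def unilateralShift (b : HilbertBasis ℕ 𝕜 H) : H →ₗᵢ[𝕜] H :=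
  (b.orthonormal.comp _ (add_left_injective 1)).orthogonalFamily.linearIsometry.comp
    b.repr.toLinearIsometry

theorem unilateralShift_apply_basis (b : HilbertBasis ℕ 𝕜 H) (n : ℕ) :
    unilateralShift b (b n) = b (n + 1) := by
  rw [unilateralShift, LinearIsometry.coe_comp, Function.comp_apply,
    LinearIsometryEquiv.coe_toLinearIsometry, b.repr_self,
    OrthogonalFamily.linearIsometry_apply_single]
  simp

theorem inner_zero_unilateralShift (b : HilbertBasis ℕ 𝕜 H) (x : H) :
    inner 𝕜 (b 0) (unilateralShift b x) = 0 := by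
  have hzero : innerSL 𝕜 (b 0) ∘L (unilateralShift b).toContinuousLinearMap = 0 := by
    refine ContinuousLinearMap.ext_on
      (Submodule.dense_iff_topologicalClosure_eq_top.mpr b.dense_span) ?_
    rintro _ ⟨n, rfl⟩
    simpa [unilateralShift_apply_basis] using b.orthonormal.inner_eq_zero n.succ_ne_zero.symm
  exact congr($hzero x)

theorem star_unilateralShift_mul_self (b : HilbertBasis ℕ 𝕜 H) :
    star (unilateralShift b).toContinuousLinearMap *
      (unilateralShift b).toContinuousLinearMap = 1 :=
  (ContinuousLinearMap.norm_map_iff_adjoint_comp_self _).mp (unilateralShift b).norm_map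

theorem rankOne_zero_mul_unilateralShift (b : HilbertBasis ℕ 𝕜 H) :
    InnerProductSpace.rankOne 𝕜 (b 0) (b 0) * (unilateralShift b).toContinuousLinearMap = 0 := by
  ext x
  simp [inner_zero_unilateralShift]

end Hilbert

section Subnormal

variable {E : Type u} [NormedAddCommGroup E] [InnerProductSpace ℂ E] [CompleteSpace E]

theorem IsSubnormal.norm_apply_sq_le {n : ℕ} {T : Fin n → E →L[ℂ] E} (hT : IsSubnormal T)
    (j : Fin n) (x : E) : ‖T j x‖ ^ 2 ≤ ‖T j (T j x)‖ * ‖x‖ := by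
  obtain ⟨E', _, _, _, ι, N, -, hN, hext⟩ := hT
  have : IsStarNormal (N j) := ⟨(hN j).symm⟩
  simpa only [hext, ι.norm_map] using norm_apply_sq_le_of_isStarNormal (N j) (ι x)

theorem not_isSubnormal_isometry_add_projection {s p : E →L[ℂ] E} (hs : star s * s = 1)
    (hp : IsStarProjection p) (hps : p * s = 0) (hp0 : p ≠ 0) :
    ¬ IsSubnormal (fun _ : Fin 1 ↦ s + p) := by
  intro hsub
  obtain ⟨y, hy⟩ : ∃ y, p y ≠ 0 := by
    by_contra! h
    exact hp0 (ContinuousLinearMap.ext h)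
  set x := p y
  have hpx : p x = x := congr($(hp.isIdempotentElem.eq) y)
  have hpTx : p ((s + p) x) = x := by
    have hpsx : p (s x) = 0 := congr($hps x)
    rw [_root_.add_apply, map_add, hpsx, hpx, hpx, zero_add]
  have hnorm := norm_isometry_add_projection_apply_sq hs hp hps
  have hT : ‖(s + p) x‖ ^ 2 = 2 * ‖x‖ ^ 2 := by rw [hnorm, hpx]; ring
  have hTT : ‖(s + p) ((s + p) x)‖ ^ 2 = 3 * ‖x‖ ^ 2 := by rw [hnorm, hpTx, hT]; ring
  have hle : 2 * ‖x‖ ^ 2 ≤ ‖(s + p) ((s + p) x)‖ * ‖x‖ := hT ▸ hsub.norm_apply_sq_le 0 x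
  have hfour : 4 * ‖x‖ ^ 4 ≤ 3 * ‖x‖ ^ 4 := calc
    4 * ‖x‖ ^ 4 = (2 * ‖x‖ ^ 2) ^ 2 := by ring
    _ ≤ (‖(s + p) ((s + p) x)‖ * ‖x‖) ^ 2 := by gcongr
    _ = 3 * ‖x‖ ^ 4 := by rw [mul_pow, hTT]; ring
  have hpos : 0 < ‖x‖ ^ 4 := by positivity
  linarith

end Subnormal

/-- Proposition `sfnots`: the ideal `I = J ∩ ℝ[x,y]`, where
`J = ((z-1)(zz̄-1), (z̄-1)(zz̄-1)) ⊆ ℂ[z,z̄]` (the unit circle with a thickened point),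
satisfies (Sf) — every matrix annihilated by `I` is unitary, hence normal — but not
(S): some bounded operator annihilated by `I` is not subnormal. -/
theorem statement11 (g₁ g₂ : CPoly 1)
    (hg₁ : g₁ = (X (Sum.inl 0) - 1) * (X (Sum.inl 0) * X (Sum.inr 0) - 1))
    (hg₂ : g₂ = (X (Sum.inr 0) - 1) * (X (Sum.inl 0) * X (Sum.inr 0) - 1))
    (I : Set (CPoly 1))
    (hI : I = {g : CPoly 1 | g ∈ Ideal.span {g₁, g₂} ∧ hermStar 1 g = g}) :
    (∀ (m : ℕ) (T : Matrix (Fin m) (Fin m) ℂ),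
      (∀ g ∈ I, psiMat (fun _ : Fin 1 => T) g = 0) → Tᴴ * T = 1 ∧ Commute T Tᴴ) ∧
    ∃ (E : Type) (_ : NormedAddCommGroup E) (_ : InnerProductSpace ℂ E)
      (_ : CompleteSpace E) (T : E →L[ℂ] E),
        (∀ g ∈ I, psiOp (fun _ : Fin 1 => T) g = 0) ∧
        ¬ IsSubnormal (fun _ : Fin 1 => T) := by
  subst hg₁ hg₂ hI
  simp only [Set.mem_ofPred_eq, and_imp, psiMat_eq_hereditaryCalculus, psiOp_eq_hereditaryCalculus]
  constructor
  · intro m T hT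
    have hunitary : Tᴴ * T = 1 :=
      star_mul_self_eq_one_of_sub_one_mul_eq_zero (fun _ ↦ conjTranspose_mul_self_eq_zero.mp)
        (forall_hermitian_hereditaryCalculus_eq_zero_iff.mp hT)
    exact ⟨hunitary, (mul_eq_one_comm.mp hunitary).trans hunitary.symm⟩
  · let b : HilbertBasis ℕ ℂ (lp (fun _ : ℕ ↦ ℂ) 2) := .ofRepr (.refl ℂ _)
    let S := (unilateralShift b).toContinuousLinearMap
    let π := InnerProductSpace.rankOne ℂ (b 0) (b 0)
    have hS : star S * S = 1 := star_unilateralShift_mul_self b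
    have hπ : IsStarProjection π :=
      InnerProductSpace.isStarProjection_rankOne_self (b.orthonormal.norm_eq_one 0)
    have hπS : π * S = 0 := rankOne_zero_mul_unilateralShift b
    have hb0 : b 0 ≠ 0 := b.orthonormal.ne_zero 0
    exact ⟨_, _, _, inferInstance, S + π,
      forall_hermitian_hereditaryCalculus_eq_zero_iff.mpr
        (star_sub_one_mul_isometry_add_projection_eq_zero hS hπ hπS),
      not_isSubnormal_isometry_add_projection hS hπ hπS
        (InnerProductSpace.rankOne_ne_zero hb0 hb0)⟩

end
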